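/- arXiv:math/0610417 — 3 statements merged into one kernel-verified Lean document; each statement's English description precedes it below -/
import Mathlib

section
/- Functional equation for the denominator of the genus-2 Rankin series: write D(X) = Σ_{i=0}^{16} s_i X^i ∈ K[X]. Then for every i with 0 ≤ i ≤ 8 one has s_{16−i} = (x₀²y₀²x₁x₂y₁y₂)^{8−i}·s_i. (Note x₀²y₀²x₁x₂y₁y₂ is the spherical image of p⁶[p]⊗[p], so this is the functional equation s_{16−i} = (p⁶[p]⊗[p])^{8−i}s_i of Theorem 3.1.) -/
noncomputable section

open PowerSeries

abbrev K : Type := FractionRing (MvPolynomial (Fin 7) ℚ)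

def p : K := algebraMap (MvPolynomial (Fin 7) ℚ) K (MvPolynomial.X 0)
def x₀ : K := algebraMap (MvPolynomial (Fin 7) ℚ) K (MvPolynomial.X 1)
def x₁ : K := algebraMap (MvPolynomial (Fin 7) ℚ) K (MvPolynomial.X 2)
def x₂ : K := algebraMap (MvPolynomial (Fin 7) ℚ) K (MvPolynomial.X 3)
def y₀ : K := algebraMap (MvPolynomial (Fin 7) ℚ) K (MvPolynomial.X 4)
def y₁ : K := algebraMap (MvPolynomial (Fin 7) ℚ) K (MvPolynomial.X 5)
def y₂ : K := algebraMap (MvPolynomial (Fin 7) ℚ) K (MvPolynomial.X 6)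

/-- The four "exponential frequencies" 1, x₁, x₂, x₁x₂ (resp. 1, y₁, y₂, y₁y₂). -/
def uu : Fin 4 → K := ![1, x₁, x₂, x₁*x₂]
def vv : Fin 4 → K := ![1, y₁, y₂, y₁*y₂]

/-- The denominator D(X) = Π_{u,v} (1 − x₀y₀uvX), product of sixteen linear factors. -/
def D : Polynomial K :=
  ∏ i : Fin 4, ∏ j : Fin 4, (1 - Polynomial.C (x₀*y₀*uu i*vv j) * Polynomial.X)

/-!
Swapping each of the frequencies `1, x₁, x₂, x₁x₂` with its complement (`1 ↔ x₁x₂`, `x₁ ↔ x₂`), and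
likewise for the `y`s, splits the sixteen linear factors of `D` into eight pairs
`(1 - aX)(1 - bX) = 1 - (a + b)X + MX²` with the same product `ab = M = x₀²y₀²x₁x₂y₁y₂`. Each pair
satisfies the functional equation of half-degree `1`, and half-degrees add under multiplication.
-/

section SelfReciprocal

variable {R : Type*} [CommSemiring R] {M : R}

/-- The functional equation `f(X) = Mⁿ X²ⁿ f(1 / (M X))` of weight `M` and half-degree `n`, which
reads `s_{2n-i} = M^{n-i} s_i` on coefficients. Only `i ≤ n` is used, so that no inverse of `M` is
needed; the degree bound makes the reflection `i ↦ 2n - i` act on all coefficients. -/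
structure SelfReciprocal (M : R) (n : ℕ) (f : Polynomial R) : Prop where
  natDegree_le : f.natDegree ≤ 2 * n
  coeff_sub : ∀ i ≤ n, f.coeff (2 * n - i) = M ^ (n - i) * f.coeff i

namespace SelfReciprocal

variable {m n : ℕ} {f g : Polynomial R}

lemma coeff_reflect_of_le (hf : SelfReciprocal M n f) {i : ℕ} (hi : i ≤ n) :
    (f.reflect (2 * n)).coeff i = M ^ (n - i) * f.coeff i := by
  rw [Polynomial.coeff_reflect, Polynomial.revAt_le (by lia), hf.coeff_sub i hi]

lemma coeff_eq_pow_mul_coeff_reflect_of_le (hf : SelfReciprocal M n f) {i : ℕ} (hi : n ≤ i) :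
    f.coeff i = M ^ (i - n) * (f.reflect (2 * n)).coeff i := by
  rw [Polynomial.coeff_reflect]
  rcases le_or_gt i (2 * n) with h | h
  · have hcoeff := hf.coeff_sub (2 * n - i) (by lia)
    rwa [show 2 * n - (2 * n - i) = i by lia, show n - (2 * n - i) = i - n by lia,
      ← Polynomial.revAt_le h] at hcoeff
  · have hzero : f.coeff i = 0 :=
      Polynomial.coeff_eq_zero_of_natDegree_lt (hf.natDegree_le.trans_lt h)
    rw [Polynomial.revAt_eq_self_of_lt h, hzero, mul_zero]

-- Beyond the middle, `f.coeff i` carries the extra power `M ^ (i - m)` over its mirror image; it is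
-- absorbed by `M ^ (n - j)`, because `i + j ≤ m + n` gives `i - m ≤ n - j`.
lemma coeff_reflect_mul_coeff_reflect_of_right_le (hf : SelfReciprocal M m f)
    (hg : SelfReciprocal M n g) {i j : ℕ} (hij : i + j ≤ m + n) (hj : j ≤ n) :
    (f.reflect (2 * m)).coeff i * (g.reflect (2 * n)).coeff j =
      M ^ (m + n - (i + j)) * (f.coeff i * g.coeff j) := by
  rw [hg.coeff_reflect_of_le hj]
  rcases le_total i m with hi | hi
  · rw [hf.coeff_reflect_of_le hi, show m + n - (i + j) = (m - i) + (n - j) by lia, pow_add]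
    ring
  · rw [hf.coeff_eq_pow_mul_coeff_reflect_of_le hi,
      show n - j = (m + n - (i + j)) + (i - m) by lia, pow_add]
    ring

lemma coeff_reflect_mul_coeff_reflect (hf : SelfReciprocal M m f) (hg : SelfReciprocal M n g)
    {i j : ℕ} (hij : i + j ≤ m + n) :
    (f.reflect (2 * m)).coeff i * (g.reflect (2 * n)).coeff j =
      M ^ (m + n - (i + j)) * (f.coeff i * g.coeff j) := by
  rcases le_total j n with hj | hj
  · exact hf.coeff_reflect_mul_coeff_reflect_of_right_le hg hij hj
  · have hswap := hg.coeff_reflect_mul_coeff_reflect_of_right_le hf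
      (i := j) (j := i) (by lia) (by lia)
    rwa [mul_comm, mul_comm (f.coeff i), add_comm m, add_comm i]

lemma one : SelfReciprocal M 0 1 where
  natDegree_le := Polynomial.natDegree_one.le
  coeff_sub i hi := by simp [Nat.le_zero.mp hi]

lemma mul (hf : SelfReciprocal M m f) (hg : SelfReciprocal M n g) :
    SelfReciprocal M (m + n) (f * g) where
  natDegree_le :=
    (Polynomial.natDegree_mul_le_of_le hf.natDegree_le hg.natDegree_le).trans_eq (mul_add ..).symm
  coeff_sub i hi :=
    calc (f * g).coeff (2 * (m + n) - i)
        = (f.reflect (2 * m) * g.reflect (2 * n)).coeff i := by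
          rw [← Polynomial.reflect_mul f g hf.natDegree_le hg.natDegree_le, ← mul_add,
            Polynomial.coeff_reflect, Polynomial.revAt_le (by lia)]
      _ = ∑ a ∈ Finset.HasAntidiagonal.antidiagonal i,
            M ^ (m + n - i) * (f.coeff a.1 * g.coeff a.2) := by
          rw [Polynomial.coeff_mul]
          refine Finset.sum_congr rfl fun a ha ↦ ?_
          obtain rfl := Finset.HasAntidiagonal.mem_antidiagonal.mp ha
          exact hf.coeff_reflect_mul_coeff_reflect hg hi
      _ = M ^ (m + n - i) * (f * g).coeff i := by rw [Polynomial.coeff_mul, Finset.mul_sum]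

lemma prod {ι : Type*} (s : Finset ι) {n : ι → ℕ} {f : ι → Polynomial R}
    (hf : ∀ i ∈ s, SelfReciprocal M (n i) (f i)) :
    SelfReciprocal M (∑ i ∈ s, n i) (∏ i ∈ s, f i) := by
  classical
  induction s using Finset.induction_on with
  | empty => simpa only [Finset.sum_empty, Finset.prod_empty] using one
  | insert i s hi ih =>
    rw [Finset.sum_insert hi, Finset.prod_insert hi]
    exact (hf i (Finset.mem_insert_self i s)).mul
      (ih fun j hj ↦ hf j (Finset.mem_insert_of_mem hj))

end SelfReciprocal

end SelfReciprocal

section LinearFactors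

variable {R : Type*} [CommRing R]

lemma selfReciprocal_linear_mul_linear (a b : R) :
    SelfReciprocal (a * b) 1
      ((1 - Polynomial.C a * Polynomial.X) * (1 - Polynomial.C b * Polynomial.X)) := by
  have hexpand : (1 - Polynomial.C a * Polynomial.X) * (1 - Polynomial.C b * Polynomial.X) =
      Polynomial.C (a * b) * Polynomial.X ^ 2 + Polynomial.C (-(a + b)) * Polynomial.X +
        Polynomial.C 1 := by
    simp only [Polynomial.C_mul, Polynomial.C_neg, Polynomial.C_add, Polynomial.C_1]
    ring
  rw [hexpand]
  refine ⟨Polynomial.natDegree_quadratic_le, fun i hi ↦ ?_⟩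
  interval_cases i <;> simp [Polynomial.coeff_X, Polynomial.coeff_one, -map_mul]

lemma selfReciprocal_prod_linear_mul_prod_linear {ι κ : Type*} [Fintype ι] [Fintype κ] {M : R}
    {a : ι → R} {b : κ → R} (σ : ι ≃ κ) (hab : ∀ i, a i * b (σ i) = M) :
    SelfReciprocal M (Fintype.card ι)
      ((∏ i, (1 - Polynomial.C (a i) * Polynomial.X)) *
        ∏ j, (1 - Polynomial.C (b j) * Polynomial.X)) := by
  rw [← Equiv.prod_comp σ fun j ↦ 1 - Polynomial.C (b j) * Polynomial.X,
    ← Finset.prod_mul_distrib, Fintype.card_eq_sum_ones]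
  refine SelfReciprocal.prod _ fun i _ ↦ ?_
  rw [← hab i]
  exact selfReciprocal_linear_mul_linear _ _

end LinearFactors

section RankinDenominator

variable {R : Type*} [CommRing R]

/-- The frequencies `1, a, b, ab` attached to the Satake parameters `a, b` in genus `2`, ordered so
that `Fin.rev` exchanges complementary ones; `uu` and `vv` are instances. -/
def spinFrequency (a b : R) : Fin 4 → R := ![1, a, b, a * b]

lemma spinFrequency_mul_rev (a b : R) (i : Fin 4) :
    spinFrequency a b i * spinFrequency a b i.rev = a * b := by
  fin_cases i <;> simp [spinFrequency, Fin.rev, mul_comm]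

/-- The denominator of the genus-`2` Rankin series with Satake parameters `α₀, α₁, α₂` and
`β₀, β₁, β₂` in an arbitrary commutative ring; `D` is the case of indeterminates. -/
def rankinDenominator (α₀ α₁ α₂ β₀ β₁ β₂ : R) : Polynomial R :=
  ∏ i, ∏ j, (1 - Polynomial.C (α₀ * β₀ * spinFrequency α₁ α₂ i * spinFrequency β₁ β₂ j) *
    Polynomial.X)

lemma selfReciprocal_rankinDenominator (α₀ α₁ α₂ β₀ β₁ β₂ : R) :
    SelfReciprocal (α₀ ^ 2 * β₀ ^ 2 * α₁ * α₂ * β₁ * β₂) 8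
      (rankinDenominator α₀ α₁ α₂ β₀ β₁ β₂) := by
  let a (i j : Fin 4) : R := α₀ * β₀ * spinFrequency α₁ α₂ i * spinFrequency β₁ β₂ j
  have hpair (i j : Fin 4) : a i j * a i.rev j.rev = α₀ ^ 2 * β₀ ^ 2 * α₁ * α₂ * β₁ * β₂ := by
    linear_combination
      α₀ ^ 2 * β₀ ^ 2 * spinFrequency β₁ β₂ j * spinFrequency β₁ β₂ j.rev *
          spinFrequency_mul_rev α₁ α₂ i +
        α₀ ^ 2 * β₀ ^ 2 * (α₁ * α₂) * spinFrequency_mul_rev β₁ β₂ j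
  have hrow (i : Fin 4) := selfReciprocal_prod_linear_mul_prod_linear Fin.revPerm (hpair i)
  have hsplit : rankinDenominator α₀ α₁ α₂ β₀ β₁ β₂ =
      ((∏ j, (1 - Polynomial.C (a 0 j) * Polynomial.X)) *
        ∏ j, (1 - Polynomial.C (a 3 j) * Polynomial.X)) *
      ((∏ j, (1 - Polynomial.C (a 1 j) * Polynomial.X)) *
        ∏ j, (1 - Polynomial.C (a 2 j) * Polynomial.X)) := by
    rw [rankinDenominator, Fin.prod_univ_four]
    ring
  rw [hsplit]
  exact (hrow 0).mul (hrow 1)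

theorem stmt_11_general (α₀ α₁ α₂ β₀ β₁ β₂ : R) (i : ℕ) (hi : i ≤ 8) :
    (rankinDenominator α₀ α₁ α₂ β₀ β₁ β₂).coeff (16 - i) =
      (α₀ ^ 2 * β₀ ^ 2 * α₁ * α₂ * β₁ * β₂) ^ (8 - i) *
        (rankinDenominator α₀ α₁ α₂ β₀ β₁ β₂).coeff i :=
  (selfReciprocal_rankinDenominator α₀ α₁ α₂ β₀ β₁ β₂).coeff_sub i hi

end RankinDenominator

theorem stmt_11 (i : ℕ) (hi : i ≤ 8) :
    D.coeff (16 - i) = (x₀^2*y₀^2*x₁*x₂*y₁*y₂)^(8-i) * D.coeff i :=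
  stmt_11_general x₀ x₁ x₂ y₀ y₁ y₂ i hi

end
end

section
/- The quadratic coefficient of the denominator of the genus-2 Rankin series: the coefficient s₂ of X² in D(X) equals −p(2p(p²+1)²·CC' + 2p(p²+1)·(BC' + CB') + 2p·BB' − (p²+1)·(A²C' + CA'²) − (A²B' + BA'²)). -/
noncomputable section

open PowerSeries

/-- Spherical images of the genus-2 Hecke operators T(p), T₁(p²), [p]₂ in the x-variables. -/
def A : K := x₀*(1+x₁)*(1+x₂)
def B : K := x₀^2*((x₁^2*x₂ + x₁*x₂^2)*p^2 + x₁*x₂*p^2 - x₁*x₂ + (x₁+x₂)*p^2)/p^3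
def Cc : K := x₀^2*x₁*x₂/p^3

/-- The same spherical images in the y-variables. -/
def A' : K := y₀*(1+y₁)*(1+y₂)
def B' : K := y₀^2*((y₁^2*y₂ + y₁*y₂^2)*p^2 + y₁*y₂*p^2 - y₁*y₂ + (y₁+y₂)*p^2)/p^3
def Cc' : K := y₀^2*y₁*y₂/p^3

/-!
Since `D` is the product of the `1 - ab X` over the parameters `a` on the `x`-side and `b` on the
`y`-side, its `X²`-coefficient is the second elementary symmetric function of the products `ab`,
which is `e₁(a)² e₂(b) + e₂(a) e₁(b)² - 2 e₂(a) e₂(b)`. On each side the four parameters are the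
inverse roots of the spinor Hecke polynomial
`1 - T(p) X + (p T₁(p²) + p (p² + 1) [p]₂) X² - …`, which gives `e₁` and `e₂` as Hecke operators.
-/

section ElementarySymmetric

variable {R : Type*} [CommSemiring R]

theorem esymm_succ_zero (k : ℕ) : (0 : Multiset R).esymm (k + 1) = 0 := by
  simp [Multiset.esymm, Multiset.powersetCard_zero_right]

theorem esymm_succ_cons (a : R) (s : Multiset R) (k : ℕ) :
    (a ::ₘ s).esymm (k + 1) = s.esymm (k + 1) + a * s.esymm k := by
  simp [Multiset.esymm, Multiset.powersetCard_cons, Multiset.sum_map_mul_left]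

theorem esymm_one_eq_sum (s : Multiset R) : s.esymm 1 = s.sum := by
  simp [Multiset.esymm, Multiset.powersetCard_one]

theorem esymm_two_add (s t : Multiset R) :
    (s + t).esymm 2 = s.esymm 2 + s.sum * t.sum + t.esymm 2 := by
  induction s using Multiset.induction with
  | empty => rw [zero_add, esymm_succ_zero, Multiset.sum_zero, zero_mul, zero_add, zero_add]
  | cons a s ih =>
    rw [Multiset.cons_add, esymm_succ_cons, esymm_succ_cons, ih, esymm_one_eq_sum,
      esymm_one_eq_sum, Multiset.sum_add, Multiset.sum_cons]
    ring

theorem esymm_map_mul_left (a : R) (s : Multiset R) (k : ℕ) :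
    (s.map (a * ·)).esymm k = a ^ k * s.esymm k :=
  (Multiset.pow_smul_esymm a k s).symm

end ElementarySymmetric

section TensorParameters

/-- The multiset of pairwise products `a * b` with `a ∈ s` and `b ∈ t`, counted with multiplicity.
For eigenvalues of two endomorphisms these are the eigenvalues of the tensor product. -/
def tensorParameters {R : Type*} [Mul R] (s t : Multiset R) : Multiset R :=
  (s ×ˢ t).map fun c => c.1 * c.2

theorem tensorParameters_cons {R : Type*} [Mul R] (a : R) (s t : Multiset R) :
    tensorParameters (a ::ₘ s) t = t.map (a * ·) + tensorParameters s t := by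
  simp [tensorParameters, Multiset.cons_product]

theorem sum_tensorParameters {R : Type*} [NonUnitalNonAssocSemiring R] (s t : Multiset R) :
    (tensorParameters s t).sum = s.sum * t.sum := by
  induction s using Multiset.induction with
  | empty => simp [tensorParameters]
  | cons a s ih =>
    rw [tensorParameters_cons, Multiset.sum_add, Multiset.sum_map_mul_left, Multiset.map_id', ih,
      Multiset.sum_cons, add_mul]

theorem esymm_two_tensorParameters {R : Type*} [CommRing R] (s t : Multiset R) :
    (tensorParameters s t).esymm 2 =
      s.sum ^ 2 * t.esymm 2 + s.esymm 2 * t.sum ^ 2 - 2 * (s.esymm 2 * t.esymm 2) := by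
  induction s using Multiset.induction with
  | empty => simp [tensorParameters, esymm_succ_zero]
  | cons a s ih =>
    rw [tensorParameters_cons, esymm_two_add, esymm_map_mul_left, Multiset.sum_map_mul_left,
      Multiset.map_id', sum_tensorParameters, ih, esymm_succ_cons, esymm_one_eq_sum,
      Multiset.sum_cons]
    ring

end TensorParameters

section EulerPolynomial

variable {R : Type*} [CommRing R]

/-- The polynomial `∏ (1 - a X)` over `a ∈ s`, the denominator of the Euler factor with
parameters `s`. -/
def eulerPolynomial (s : Multiset R) : Polynomial R :=
  (s.map fun a => 1 - Polynomial.C a * Polynomial.X).prod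

theorem coeff_eulerPolynomial (s : Multiset R) (k : ℕ) :
    (eulerPolynomial s).coeff k = (-1) ^ k * s.esymm k := by
  induction s using Multiset.induction generalizing k with
  | empty =>
    cases k with
    | zero => simp [eulerPolynomial, Multiset.esymm]
    | succ k => simp [eulerPolynomial, esymm_succ_zero, Polynomial.coeff_one]
  | cons a s ih =>
    have eulerPolynomial_cons : eulerPolynomial (a ::ₘ s) =
        eulerPolynomial s - Polynomial.C a * (Polynomial.X * eulerPolynomial s) := by
      simp only [eulerPolynomial, Multiset.map_cons, Multiset.prod_cons]
      ring
    rw [eulerPolynomial_cons, Polynomial.coeff_sub, Polynomial.coeff_C_mul]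
    cases k with
    | zero => simp [ih, Multiset.esymm]
    | succ k =>
      rw [Polynomial.coeff_X_mul, ih, ih, esymm_succ_cons]
      ring

theorem eulerPolynomial_tensorParameters (s t : Multiset R) :
    eulerPolynomial (tensorParameters s t) =
      (s.map fun a => (t.map fun b =>
        1 - Polynomial.C (a * b) * Polynomial.X).prod).prod := by
  rw [eulerPolynomial, tensorParameters, Multiset.map_map]
  exact Multiset.prod_map_product_eq_prod_prod s t _

end EulerPolynomial

section SpinorParameters

/-- The inverse roots of the genus-2 spinor Hecke polynomial with Satake parameters
`α₀, α₁, α₂`. -/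
def spinorParameters {R : Type*} [Mul R] (α₀ α₁ α₂ : R) : Multiset R :=
  {α₀, α₀ * α₁, α₀ * α₂, α₀ * (α₁ * α₂)}

/-- The spherical image of the Hecke operator `T(p)` of genus 2. -/
def sphericalT {R : Type*} [Semiring R] (α₀ α₁ α₂ : R) : R :=
  α₀ * (1 + α₁) * (1 + α₂)

/-- The spherical image of the Hecke operator `T₁(p²)` of genus 2, with `q` in the role of the
prime `p`. -/
def sphericalT₁ {F : Type*} [Field F] (q α₀ α₁ α₂ : F) : F :=
  α₀ ^ 2 * ((α₁ ^ 2 * α₂ + α₁ * α₂ ^ 2) * q ^ 2 + α₁ * α₂ * q ^ 2 - α₁ * α₂ + (α₁ + α₂) * q ^ 2)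
    / q ^ 3

/-- The spherical image of the scalar Hecke operator `[p]₂` of genus 2, with `q` in the role of the
prime `p`. -/
def sphericalScalar {F : Type*} [Field F] (q α₀ α₁ α₂ : F) : F :=
  α₀ ^ 2 * α₁ * α₂ / q ^ 3

theorem spinorParameters_eq_map {R : Type*} [MulOneClass R] (α₀ α₁ α₂ : R) :
    spinorParameters α₀ α₁ α₂ =
      Finset.univ.val.map fun i : Fin 4 => α₀ * ![1, α₁, α₂, α₁ * α₂] i := by
  change _ = {α₀ * 1, α₀ * α₁, α₀ * α₂, α₀ * (α₁ * α₂)}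
  rw [mul_one, spinorParameters]

theorem sum_spinorParameters {R : Type*} [CommSemiring R] (α₀ α₁ α₂ : R) :
    (spinorParameters α₀ α₁ α₂).sum = sphericalT α₀ α₁ α₂ := by
  simp only [spinorParameters, Multiset.insert_eq_cons, Multiset.sum_cons, Multiset.sum_singleton,
    sphericalT]
  ring

theorem esymm_two_spinorParameters {R : Type*} [CommSemiring R] (α₀ α₁ α₂ : R) :
    (spinorParameters α₀ α₁ α₂).esymm 2 =
      α₀ ^ 2 * (α₁ + α₂ + 2 * (α₁ * α₂) + α₁ ^ 2 * α₂ + α₁ * α₂ ^ 2) := by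
  simp only [spinorParameters, Multiset.insert_eq_cons, ← Multiset.cons_zero, esymm_succ_cons,
    esymm_succ_zero, esymm_one_eq_sum, Multiset.sum_cons, Multiset.sum_zero]
  ring

theorem esymm_two_spinorParameters_eq_spherical {F : Type*} [Field F] {q : F} (hq : q ≠ 0)
    (α₀ α₁ α₂ : F) :
    (spinorParameters α₀ α₁ α₂).esymm 2 =
      q * sphericalT₁ q α₀ α₁ α₂ + q * (q ^ 2 + 1) * sphericalScalar q α₀ α₁ α₂ := by
  rw [esymm_two_spinorParameters, sphericalT₁, sphericalScalar]
  field_simp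
  ring

end SpinorParameters

theorem p_ne_zero : p ≠ 0 :=
  (map_ne_zero_iff _ (IsFractionRing.injective (MvPolynomial (Fin 7) ℚ) K)).mpr
    (MvPolynomial.X_ne_zero 0)

theorem D_eq_eulerPolynomial :
    D = eulerPolynomial
      (tensorParameters (spinorParameters x₀ x₁ x₂) (spinorParameters y₀ y₁ y₂)) := by
  have spinorParameters_x : spinorParameters x₀ x₁ x₂ = Finset.univ.val.map (x₀ * uu ·) :=
    spinorParameters_eq_map x₀ x₁ x₂
  have spinorParameters_y : spinorParameters y₀ y₁ y₂ = Finset.univ.val.map (y₀ * vv ·) :=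
    spinorParameters_eq_map y₀ y₁ y₂
  simp only [D, eulerPolynomial_tensorParameters, spinorParameters_x, spinorParameters_y,
    Multiset.map_map, Function.comp_apply, Finset.prod_map_val, mul_assoc, mul_left_comm]

theorem stmt_13_general {F : Type*} [Field F] {q : F} (hq : q ≠ 0) (α₀ α₁ α₂ β₀ β₁ β₂ : F) :
    let T := sphericalT α₀ α₁ α₂
    let T₁ := sphericalT₁ q α₀ α₁ α₂
    let Δ := sphericalScalar q α₀ α₁ α₂
    let T' := sphericalT β₀ β₁ β₂
    let T₁' := sphericalT₁ q β₀ β₁ β₂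
    let Δ' := sphericalScalar q β₀ β₁ β₂
    (eulerPolynomial (tensorParameters (spinorParameters α₀ α₁ α₂)
        (spinorParameters β₀ β₁ β₂))).coeff 2 =
      -(q * (2 * q * (q ^ 2 + 1) ^ 2 * (Δ * Δ') + 2 * q * (q ^ 2 + 1) * (T₁ * Δ' + Δ * T₁')
        + 2 * q * (T₁ * T₁') - (q ^ 2 + 1) * (T ^ 2 * Δ' + Δ * T' ^ 2)
        - (T ^ 2 * T₁' + T₁ * T' ^ 2))) := by
  intro T T₁ Δ T' T₁' Δ'
  rw [coeff_eulerPolynomial, esymm_two_tensorParameters, sum_spinorParameters,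
    sum_spinorParameters, esymm_two_spinorParameters_eq_spherical hq,
    esymm_two_spinorParameters_eq_spherical hq]
  ring

theorem stmt_13 :
    D.coeff 2 = -(p*(2*p*(p^2+1)^2*(Cc*Cc') + 2*p*(p^2+1)*(B*Cc' + Cc*B') + 2*p*(B*B')
      - (p^2+1)*(A^2*Cc' + Cc*A'^2) - (A^2*B' + B*A'^2))) := by
  rw [D_eq_eulerPolynomial]
  exact stmt_13_general p_ne_zero x₀ x₁ x₂ y₀ y₁ y₂

end
end

section
/- The cubic coefficient of the denominator of the genus-2 Rankin series: the coefficient s₃ of X³ in D(X) equals p²·((2p⁴ + 4p² − 1)·CC' + (2p² − 1)·(BC' + CB') − BB' − p·(A²C' + CA'²))·AA'. -/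
/-!
Put `P = ∏ᵢ (1 - αᵢ X)` and `Q = ∏ⱼ (1 - βⱼ X)`. The product `∏ᵢ ∏ⱼ (1 - αᵢ βⱼ X)` equals
`∏ᵢ Q(αᵢ X)`, so its coefficients are polynomials in those of `P` and `Q`. When the `αᵢ` are the
four numbers `x₀, x₀x₁, x₀x₂, x₀x₁x₂`, Andrianov's factorization reads, on Satake images,
`P = 1 - T(p) X + (p T₁(p²) + (p³ + p) [p]₂) X² - p³ [p]₂ T(p) X³ + p⁶ [p]₂² X⁴`;
substituting these coefficients gives the formula.
-/

noncomputable section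

open PowerSeries

section ProdComp

variable {R ι κ : Type*}

theorem mul_coeff_two [Semiring R] (P Q : Polynomial R) :
    (P * Q).coeff 2 = P.coeff 0 * Q.coeff 2 + P.coeff 1 * Q.coeff 1 + P.coeff 2 * Q.coeff 0 := by
  simp [Polynomial.coeff_mul, Finset.Nat.antidiagonal_succ, add_assoc]

theorem mul_coeff_three [Semiring R] (P Q : Polynomial R) :
    (P * Q).coeff 3 = P.coeff 0 * Q.coeff 3 + P.coeff 1 * Q.coeff 2 + P.coeff 2 * Q.coeff 1
      + P.coeff 3 * Q.coeff 0 := by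
  simp [Polynomial.coeff_mul, Finset.Nat.antidiagonal_succ, add_assoc]

theorem coeff_zero_prod_comp_C_mul_X [CommSemiring R] {Q : Polynomial R} (hQ : Q.coeff 0 = 1)
    (s : Finset ι) (α : ι → R) :
    (∏ i ∈ s, Q.comp (Polynomial.C (α i) * Polynomial.X)).coeff 0 = 1 := by
  simp [Polynomial.coeff_zero_prod, hQ]

theorem coeff_succ_one_sub_C_mul_X_mul [Ring R] (a : R) (P : Polynomial R) (n : ℕ) :
    ((1 - Polynomial.C a * Polynomial.X) * P).coeff (n + 1) = P.coeff (n + 1) - a * P.coeff n := by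
  simp [sub_mul, mul_assoc]

variable [CommRing R]

theorem coeff_zero_prod_one_sub_C_mul_X (s : Finset ι) (α : ι → R) :
    (∏ i ∈ s, (1 - Polynomial.C (α i) * Polynomial.X)).coeff 0 = 1 := by
  simp [Polynomial.coeff_zero_prod]

theorem coeff_one_prod_comp_C_mul_X {Q : Polynomial R} (hQ : Q.coeff 0 = 1)
    (s : Finset ι) (α : ι → R) {P : Polynomial R}
    (hP : P = ∏ i ∈ s, (1 - Polynomial.C (α i) * Polynomial.X)) :
    (∏ i ∈ s, Q.comp (Polynomial.C (α i) * Polynomial.X)).coeff 1 =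
      -(P.coeff 1 * Q.coeff 1) := by
  classical
  induction s using Finset.induction_on generalizing P with
  | empty => simp [hP, Polynomial.coeff_one]
  | insert a s ha ih =>
    rw [hP, Finset.prod_insert ha, Finset.prod_insert ha, Polynomial.mul_coeff_one,
      coeff_succ_one_sub_C_mul_X_mul _ _ 0, coeff_zero_prod_one_sub_C_mul_X,
      coeff_zero_prod_comp_C_mul_X hQ, ih rfl]
    simp only [Polynomial.comp_C_mul_X_coeff, hQ]
    ring

theorem coeff_two_prod_comp_C_mul_X {Q : Polynomial R} (hQ : Q.coeff 0 = 1)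
    (s : Finset ι) (α : ι → R) {P : Polynomial R}
    (hP : P = ∏ i ∈ s, (1 - Polynomial.C (α i) * Polynomial.X)) :
    (∏ i ∈ s, Q.comp (Polynomial.C (α i) * Polynomial.X)).coeff 2 =
      P.coeff 2 * Q.coeff 1 ^ 2 + (P.coeff 1 ^ 2 - 2 * P.coeff 2) * Q.coeff 2 := by
  classical
  induction s using Finset.induction_on generalizing P with
  | empty => simp [hP, Polynomial.coeff_one]
  | insert a s ha ih =>
    rw [hP, Finset.prod_insert ha, Finset.prod_insert ha, mul_coeff_two,
      coeff_succ_one_sub_C_mul_X_mul _ _ 0, coeff_succ_one_sub_C_mul_X_mul _ _ 1,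
      coeff_zero_prod_one_sub_C_mul_X, coeff_zero_prod_comp_C_mul_X hQ,
      coeff_one_prod_comp_C_mul_X hQ s α rfl, ih rfl]
    simp only [Polynomial.comp_C_mul_X_coeff, hQ]
    ring

theorem coeff_three_prod_comp_C_mul_X {Q : Polynomial R} (hQ : Q.coeff 0 = 1)
    (s : Finset ι) (α : ι → R) {P : Polynomial R}
    (hP : P = ∏ i ∈ s, (1 - Polynomial.C (α i) * Polynomial.X)) :
    (∏ i ∈ s, Q.comp (Polynomial.C (α i) * Polynomial.X)).coeff 3 =
      -(P.coeff 3 * Q.coeff 1 ^ 3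
        + (P.coeff 1 * P.coeff 2 - 3 * P.coeff 3) * (Q.coeff 1 * Q.coeff 2)
        + (P.coeff 1 ^ 3 - 3 * (P.coeff 1 * P.coeff 2) + 3 * P.coeff 3) * Q.coeff 3) := by
  classical
  induction s using Finset.induction_on generalizing P with
  | empty => simp [hP, Polynomial.coeff_one]
  | insert a s ha ih =>
    rw [hP, Finset.prod_insert ha, Finset.prod_insert ha, mul_coeff_three,
      coeff_succ_one_sub_C_mul_X_mul _ _ 0, coeff_succ_one_sub_C_mul_X_mul _ _ 1,
      coeff_succ_one_sub_C_mul_X_mul _ _ 2, coeff_zero_prod_one_sub_C_mul_X,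
      coeff_zero_prod_comp_C_mul_X hQ, coeff_one_prod_comp_C_mul_X hQ s α rfl,
      coeff_two_prod_comp_C_mul_X hQ s α rfl, ih rfl]
    simp only [Polynomial.comp_C_mul_X_coeff, hQ]
    ring

theorem prod_one_sub_C_mul_mul_X (t : Finset κ) (a : R) (β : κ → R) :
    ∏ j ∈ t, (1 - Polynomial.C (a * β j) * Polynomial.X) =
      (∏ j ∈ t, (1 - Polynomial.C (β j) * Polynomial.X)).comp (Polynomial.C a * Polynomial.X) := by
  simp [Polynomial.prod_comp, mul_left_comm, mul_assoc]

theorem coeff_three_prod_prod_one_sub_C_mul_X (s : Finset ι) (t : Finset κ) (α : ι → R) (β : κ → R)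
    {P Q : Polynomial R} (hP : P = ∏ i ∈ s, (1 - Polynomial.C (α i) * Polynomial.X))
    (hQ : Q = ∏ j ∈ t, (1 - Polynomial.C (β j) * Polynomial.X)) :
    (∏ i ∈ s, ∏ j ∈ t, (1 - Polynomial.C (α i * β j) * Polynomial.X)).coeff 3 =
      -(P.coeff 3 * Q.coeff 1 ^ 3
        + (P.coeff 1 * P.coeff 2 - 3 * P.coeff 3) * (Q.coeff 1 * Q.coeff 2)
        + (P.coeff 1 ^ 3 - 3 * (P.coeff 1 * P.coeff 2) + 3 * P.coeff 3) * Q.coeff 3) := by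
  have hQ₀ : Q.coeff 0 = 1 := hQ ▸ coeff_zero_prod_one_sub_C_mul_X t β
  simp only [prod_one_sub_C_mul_mul_X, ← hQ]
  exact coeff_three_prod_comp_C_mul_X hQ₀ s α hP

end ProdComp

/-- The Satake parameters `(a₀, a₁, a₂)` of a character of the genus-2 Hecke algebra at a prime;
the value `0` is allowed. -/
structure SatakeParameters (F : Type*) where
  (a₀ a₁ a₂ : F)

namespace SatakeParameters

variable {F : Type*}

/-- The four parameters `a₀, a₀a₁, a₀a₂, a₀a₁a₂` of the spinor Euler factor. -/
def spin [CommSemiring F] (α : SatakeParameters F) (i : Fin 4) : F :=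
  α.a₀ * ![1, α.a₁, α.a₂, α.a₁ * α.a₂] i

/-- The Satake image of the Hecke operator `T(p)`. -/
def heckeT [CommSemiring F] (α : SatakeParameters F) : F :=
  α.a₀ * (1 + α.a₁) * (1 + α.a₂)

/-- The Satake image of the Hecke operator `T₁(p²)`, with `q` standing for the prime. -/
def heckeT₁ [Field F] (α : SatakeParameters F) (q : F) : F :=
  α.a₀ ^ 2 * ((α.a₁ ^ 2 * α.a₂ + α.a₁ * α.a₂ ^ 2) * q ^ 2 + α.a₁ * α.a₂ * q ^ 2 - α.a₁ * α.a₂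
    + (α.a₁ + α.a₂) * q ^ 2) / q ^ 3

/-- The Satake image of the Hecke operator `[p]₂`, with `q` standing for the prime. -/
def heckeScalar [Field F] (α : SatakeParameters F) (q : F) : F :=
  α.a₀ ^ 2 * α.a₁ * α.a₂ / q ^ 3

/-- The denominator of the genus-2 Hecke series `∑ T(p^δ) X^δ`, expressed through the Satake images
of the generators of the Hecke algebra, with `q` standing for the prime. -/
def heckePolynomial [Field F] (α : SatakeParameters F) (q : F) : Polynomial F :=
  1 - Polynomial.C α.heckeT * Polynomial.X
    + Polynomial.C (q * α.heckeT₁ q + (q ^ 3 + q) * α.heckeScalar q) * Polynomial.X ^ 2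
    - Polynomial.C (q ^ 3 * α.heckeScalar q * α.heckeT) * Polynomial.X ^ 3
    + Polynomial.C (q ^ 6 * α.heckeScalar q ^ 2) * Polynomial.X ^ 4

section Field

variable [Field F] (α : SatakeParameters F) {q : F}

theorem heckePolynomial_coeff_one : (α.heckePolynomial q).coeff 1 = -α.heckeT := by
  simp only [heckePolynomial, Polynomial.coeff_add, Polynomial.coeff_sub, Polynomial.coeff_C_mul,
    Polynomial.coeff_one, Polynomial.coeff_X, Polynomial.coeff_X_pow]
  norm_num

theorem heckePolynomial_coeff_two :
    (α.heckePolynomial q).coeff 2 = q * α.heckeT₁ q + (q ^ 3 + q) * α.heckeScalar q := by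
  simp only [heckePolynomial, Polynomial.coeff_add, Polynomial.coeff_sub, Polynomial.coeff_C_mul,
    Polynomial.coeff_one, Polynomial.coeff_X, Polynomial.coeff_X_pow]
  norm_num

theorem heckePolynomial_coeff_three :
    (α.heckePolynomial q).coeff 3 = -(q ^ 3 * α.heckeScalar q * α.heckeT) := by
  simp only [heckePolynomial, Polynomial.coeff_add, Polynomial.coeff_sub, Polynomial.coeff_C_mul,
    Polynomial.coeff_one, Polynomial.coeff_X, Polynomial.coeff_X_pow]
  norm_num

theorem pow_three_mul_heckeScalar (hq : q ≠ 0) :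
    q ^ 3 * α.heckeScalar q = α.a₀ ^ 2 * α.a₁ * α.a₂ :=
  mul_div_cancel₀ _ (pow_ne_zero 3 hq)

theorem mul_heckeT₁_add_mul_heckeScalar (hq : q ≠ 0) :
    q * α.heckeT₁ q + (q ^ 3 + q) * α.heckeScalar q =
      α.a₀ ^ 2 * (α.a₁ + α.a₂) * (1 + α.a₁ * α.a₂) + 2 * (α.a₀ ^ 2 * α.a₁ * α.a₂) := by
  unfold heckeT₁ heckeScalar
  field_simp
  ring

theorem heckePolynomial_eq_prod_spin (hq : q ≠ 0) :
    α.heckePolynomial q = ∏ i, (1 - Polynomial.C (α.spin i) * Polynomial.X) := by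
  have hscalar_sq : q ^ 6 * α.heckeScalar q ^ 2 = (α.a₀ ^ 2 * α.a₁ * α.a₂) ^ 2 := by
    rw [← α.pow_three_mul_heckeScalar hq]
    ring
  rw [heckePolynomial, mul_heckeT₁_add_mul_heckeScalar α hq, pow_three_mul_heckeScalar α hq,
    hscalar_sq, heckeT, Fin.prod_univ_four]
  simp only [spin, Matrix.cons_val, map_add, map_mul, map_pow, map_one, map_ofNat]
  ring

end Field

end SatakeParameters

theorem stmt_14_general {F : Type*} [Field F] (α β : SatakeParameters F) {q : F} (hq : q ≠ 0) :
    (∏ i, ∏ j, (1 - Polynomial.C (α.spin i * β.spin j) * Polynomial.X)).coeff 3 =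
      q ^ 2 * ((2 * q ^ 4 + 4 * q ^ 2 - 1) * (α.heckeScalar q * β.heckeScalar q)
        + (2 * q ^ 2 - 1) * (α.heckeT₁ q * β.heckeScalar q + α.heckeScalar q * β.heckeT₁ q)
        - α.heckeT₁ q * β.heckeT₁ q
        - q * (α.heckeT ^ 2 * β.heckeScalar q + α.heckeScalar q * β.heckeT ^ 2))
        * (α.heckeT * β.heckeT) := by
  rw [coeff_three_prod_prod_one_sub_C_mul_X _ _ _ _ (α.heckePolynomial_eq_prod_spin hq)
    (β.heckePolynomial_eq_prod_spin hq)]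
  simp only [SatakeParameters.heckePolynomial_coeff_one,
    SatakeParameters.heckePolynomial_coeff_two, SatakeParameters.heckePolynomial_coeff_three]
  ring

theorem D_eq_prod_spin :
    D = ∏ i, ∏ j, (1 - Polynomial.C
      ((⟨x₀, x₁, x₂⟩ : SatakeParameters K).spin i * (⟨y₀, y₁, y₂⟩ : SatakeParameters K).spin j)
        * Polynomial.X) := by
  simp only [D, uu, vv, SatakeParameters.spin, mul_assoc, mul_left_comm y₀]

theorem stmt_14 :
    D.coeff 3 = p^2*((2*p^4 + 4*p^2 - 1)*(Cc*Cc') + (2*p^2 - 1)*(B*Cc' + Cc*B')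
      - B*B' - p*(A^2*Cc' + Cc*A'^2))*(A*A') := by
  rw [D_eq_prod_spin]
  exact stmt_14_general ⟨x₀, x₁, x₂⟩ ⟨y₀, y₁, y₂⟩ p_ne_zero

end
end
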